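/- arXiv:math/0602319 — 2 statements merged into one kernel-verified Lean document; each statement's English description precedes it below -/
import Mathlib

section
/- Let G1 be a connected k1-regular finite simple graph on n1 vertices with k1 odd, and let G2 be a finite simple graph (not necessarily connected) whose maximum degree is at most k2 and whose minimum degree is at least 1. If (k1² − k1)/2 ≥ k2, then the Cartesian product G1 × G2 is antimagic. -/
/-- The vertex sum at `v` under an edge labeling `f`: the sum of the labels of all
edges incident with `v`. -/
noncomputable def vertexSum {V : Type*} [Finite V] (G : SimpleGraph V)
    (f : Sym2 V → ℕ) (v : V) : ℕ :=
  ∑ e ∈ (G.incidenceSet v).toFinite.toFinset, f e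

/-- A graph is antimagic if there is a bijection from its edge set to `{1, ..., m}`
(`m` = number of edges) such that all vertex sums are pairwise distinct. -/
def IsAntimagic {V : Type*} [Finite V] (G : SimpleGraph V) : Prop :=
  ∃ f : Sym2 V → ℕ,
    Set.BijOn f G.edgeSet (Set.Icc 1 (Nat.card G.edgeSet)) ∧
    ∀ u v : V, u ≠ v → vertexSum G f u ≠ vertexSum G f v

/-!
Decompose the edges of `G₁` into as few trails as possible. Three trail ends meeting at a vertex
would allow two different trails to be joined there, so by parity every vertex, having odd degree,
is an end exactly once. Label the edges along the concatenated trails by `1, m, 2, m - 1, …`: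
consecutive labels add up to `m + 1` or `m + 2`, so each passage of a trail through a vertex
contributes almost the same amount, and all vertex sums of `G₁` are close to one another.

In `G₁ □ G₂` the smallest labels go to the copies of `G₂`, and the copies of `G₁` are stacked above
them as layers that repeat this labeling. The order of the layers is chosen by the weights of the
vertices of `G₂`, so that passing to a higher layer gains at least `k₁` times the number of edges
of `G₁`; this exceeds the spread of the sums within a layer because `2 * k₂ + k₁ ≤ k₁ ^ 2`.
-/

open Finset

/-! ### Trail decompositions -/

-- At an inner visit the weights of the two traversed edges add up to a nonnegative number, so only
-- the visits at the two ends of the walk can contribute negatively.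
lemma sub_le_sum_filter_edges_cons {V R : Type*} [DecidableEq V] {G : SimpleGraph V} [CommRing R]
    [LinearOrder R] [IsStrictOrderedRing R] {φ : Sym2 V → R} {M : R} (x : V) {u v w : V}
    (h : G.Adj u v) (p : G.Walk v w)
    (hchain : (p.cons h).edges.IsChain (fun a b ↦ 0 ≤ φ a + φ b))
    (hM : ∀ e ∈ (p.cons h).edges, -M ≤ φ e) :
    (if x = u then φ s(u, v) else 0) - (if x = w then M else 0) ≤
      (((p.cons h).edges.filter (x ∈ ·)).map φ).sum := by
  induction p generalizing u with
  | @nil w =>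
    have hlast : -M ≤ φ s(u, w) := hM s(u, w) (by simp)
    have hne : u ≠ w := h.ne
    simp only [SimpleGraph.Walk.edges_cons, SimpleGraph.Walk.edges_nil, List.filter_cons]
    grind
  | cons h' p ih =>
    simp only [SimpleGraph.Walk.edges_cons, List.isChain_cons_cons] at hchain
    have hrest := ih h' hchain.2 fun e he ↦ hM e (by simp_all)
    rw [SimpleGraph.Walk.edges_cons, List.filter_cons]
    have hne := h.ne
    grind

/-- A walk of positive length in `G`, bundled with its two endpoints; these are the members of a
trail decomposition. -/
structure NonemptyWalk {V : Type*} (G : SimpleGraph V) where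
  {source target : V}
  walk : G.Walk source target
  not_nil : ¬ walk.Nil

namespace NonemptyWalk

variable {V : Type*} {G : SimpleGraph V}

/-- The multiset of edges traversed by the walk. -/
def edges (t : NonemptyWalk G) : Multiset (Sym2 V) := t.walk.edges

/-- The multiset of the two ends of the walk; a closed walk has a double end. -/
def ends (t : NonemptyWalk G) : Multiset V := {t.source, t.target}

lemma exists_edges_eq_singleton {e : Sym2 V} (he : e ∈ G.edgeSet) :
    ∃ t : NonemptyWalk G, t.edges = {e} := by
  induction e with | _ u v =>
  have huv : G.Adj u v := he
  exact ⟨⟨huv.toWalk, by simp⟩, by simp [edges]⟩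

lemma exists_target_eq {t : NonemptyWalk G} {x : V} (hx : x ∈ t.ends) :
    ∃ s : NonemptyWalk G, s.target = x ∧ s.edges = t.edges := by
  obtain rfl | rfl : x = t.source ∨ x = t.target := by simpa [ends] using hx
  · exact ⟨⟨t.walk.reverse, by simpa using t.not_nil⟩, rfl, by simp [edges]⟩
  · exact ⟨t, rfl, rfl⟩

lemma exists_edges_eq_add {s t : NonemptyWalk G} {x : V} (hs : x ∈ s.ends) (ht : x ∈ t.ends) :
    ∃ w : NonemptyWalk G, w.edges = s.edges + t.edges := by
  obtain ⟨s', rfl, hs'⟩ := exists_target_eq hs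
  obtain ⟨t', htarget, ht'⟩ := exists_target_eq ht
  refine ⟨⟨s'.walk.append (t'.walk.reverse.copy htarget rfl), by simp [s'.not_nil]⟩, ?_⟩
  rw [← hs', ← ht']
  simp [edges, SimpleGraph.Walk.edges_append, ← Multiset.coe_add]

lemma even_countP_edges_add_count_ends [DecidableEq V] {t : NonemptyWalk G}
    (ht : t.walk.IsTrail) (x : V) :
    Even (t.edges.countP (x ∈ ·) + t.ends.count x) := by
  rw [edges, Multiset.coe_countP, Nat.even_add, ht.even_countP_edges_iff x, ends]
  simp only [Multiset.insert_eq_cons, Multiset.count_cons, Multiset.count_singleton]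
  by_cases hs : x = t.source <;> by_cases ht : x = t.target <;> grind

/-- The total weight of the edges traversed by the walk that are incident with `x`. -/
def incidenceSum {R : Type*} [AddCommMonoid R] [DecidableEq V] (φ : Sym2 V → R) (x : V)
    (t : NonemptyWalk G) : R :=
  ((t.edges.filter (x ∈ ·)).map φ).sum

lemma neg_count_ends_mul_le_incidenceSum {R : Type*} [DecidableEq V] [CommRing R] [LinearOrder R]
    [IsStrictOrderedRing R] {φ : Sym2 V → R} {M : R} (x : V) (t : NonemptyWalk G)
    (hchain : t.walk.edges.IsChain (fun a b ↦ 0 ≤ φ a + φ b))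
    (hM : ∀ e ∈ t.walk.edges, -M ≤ φ e) :
    -(t.ends.count x * M) ≤ t.incidenceSum φ x := by
  obtain @⟨u, w, p, hp⟩ := t
  cases p with
  | nil => simp at hp
  | @cons _ v _ h p =>
    have hle := sub_le_sum_filter_edges_cons x h p hchain hM
    have hfirst : -M ≤ φ s(u, v) := hM s(u, v) (by simp)
    rw [SimpleGraph.Walk.edges_cons] at hle
    simp only [ends, Multiset.insert_eq_cons, Multiset.count_cons, Multiset.count_singleton,
      incidenceSum, edges, Multiset.filter_coe, Multiset.map_coe, Multiset.sum_coe,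
      SimpleGraph.Walk.edges_cons]
    refine le_trans ?_ hle
    push_cast
    split_ifs <;> linarith

end NonemptyWalk

section Decomposition
variable {V : Type*} {G : SimpleGraph V} [Fintype G.edgeSet]

/-- The walks in `T` together traverse every edge of `G` exactly once; in particular each of them
is a trail. -/
def IsTrailDecomposition (T : Multiset (NonemptyWalk G)) : Prop :=
  T.bind NonemptyWalk.edges = G.edgeFinset.val

variable (G) in
lemma exists_isTrailDecomposition : ∃ T : Multiset (NonemptyWalk G), IsTrailDecomposition T := by
  choose t ht using fun e : G.edgeFinset ↦
    NonemptyWalk.exists_edges_eq_singleton (SimpleGraph.mem_edgeFinset.1 e.2)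
  refine ⟨G.edgeFinset.attach.val.map t, ?_⟩
  simp only [IsTrailDecomposition, Multiset.bind_map, ht, Multiset.bind_singleton, attach_val]
  exact Multiset.attach_map_val _

variable (G) in
-- If three ends meet at a vertex, then two of them belong to different walks, and these can be
-- joined there; so a decomposition with the fewest walks has at most two ends at each vertex.
lemma exists_isTrailDecomposition_count_ends_le_two [DecidableEq V] :
    ∃ T : Multiset (NonemptyWalk G), IsTrailDecomposition T ∧
      ∀ x, (T.bind NonemptyWalk.ends).count x ≤ 2 := by
  obtain ⟨T, hT, hmin⟩ := exists_minimalFor_of_wellFoundedLT IsTrailDecomposition Multiset.card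
    (exists_isTrailDecomposition G)
  refine ⟨T, hT, fun x ↦ ?_⟩
  by_contra! hx
  obtain ⟨s, hs, hxs⟩ : ∃ s ∈ T, x ∈ s.ends :=
    Multiset.mem_bind.1 (Multiset.count_pos.1 (by lia))
  obtain ⟨T, rfl⟩ := Multiset.exists_cons_of_mem hs
  have hs_le : s.ends.count x ≤ 2 := Multiset.count_le_card x s.ends
  rw [Multiset.cons_bind, Multiset.count_add] at hx
  obtain ⟨t, ht, hxt⟩ : ∃ t ∈ T, x ∈ t.ends :=
    Multiset.mem_bind.1 (Multiset.count_pos.1 (by lia))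
  obtain ⟨T, rfl⟩ := Multiset.exists_cons_of_mem ht
  obtain ⟨w, hw⟩ := NonemptyWalk.exists_edges_eq_add hxs hxt
  have hjoin : IsTrailDecomposition (w ::ₘ T) := by
    rw [IsTrailDecomposition, ← hT]
    simp [hw, add_assoc]
  simpa using hmin hjoin

namespace IsTrailDecomposition
variable {T : Multiset (NonemptyWalk G)}

lemma isTrail (hT : IsTrailDecomposition T) {t : NonemptyWalk G} (ht : t ∈ T) :
    t.walk.IsTrail := by
  rw [SimpleGraph.Walk.isTrail_def, ← Multiset.coe_nodup]
  exact Multiset.nodup_of_le (Multiset.le_bind T ht) (hT ▸ G.edgeFinset.nodup)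

lemma sum_incidenceFinset {R : Type*} [AddCommMonoid R] [DecidableEq V]
    (hT : IsTrailDecomposition T) (φ : Sym2 V → R) (x : V) [Fintype (G.neighborSet x)] :
    ∑ e ∈ G.incidenceFinset x, φ e = (T.map (NonemptyWalk.incidenceSum φ x)).sum := by
  rw [G.incidenceFinset_eq_filter, Finset.sum, Finset.filter_val, ← hT, Multiset.filter_bind,
    Multiset.map_bind, Multiset.sum_bind]
  rfl

lemma even_degree_add_count_ends [DecidableEq V] (hT : IsTrailDecomposition T) (x : V)
    [Fintype (G.neighborSet x)] :
    Even (G.degree x + (T.bind NonemptyWalk.ends).count x) := by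
  have hdeg : G.degree x = (T.map fun t ↦ t.edges.countP (x ∈ ·)).sum := by
    rw [← G.card_incidenceFinset_eq_degree, card_eq_sum_ones, hT.sum_incidenceFinset]
    congr! 3 with t
    simp [NonemptyWalk.incidenceSum, Multiset.countP_eq_card_filter]
  rw [hdeg, Multiset.count_bind, ← Multiset.sum_map_add, even_iff_two_dvd]
  refine Multiset.dvd_sum fun n hn ↦ ?_
  obtain ⟨t, ht, rfl⟩ := Multiset.mem_map.1 hn
  exact (NonemptyWalk.even_countP_edges_add_count_ends (hT.isTrail ht) x).two_dvd

lemma neg_count_ends_mul_le_sum_incidenceFinset {R : Type*} [DecidableEq V] [CommRing R]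
    [LinearOrder R] [IsStrictOrderedRing R] (hT : IsTrailDecomposition T) {φ : Sym2 V → R} {M : R}
    (hchain : ∀ t ∈ T, t.walk.edges.IsChain (fun a b ↦ 0 ≤ φ a + φ b))
    (hM : ∀ e ∈ G.edgeSet, -M ≤ φ e) (x : V) [Fintype (G.neighborSet x)] :
    -((T.bind NonemptyWalk.ends).count x * M) ≤ ∑ e ∈ G.incidenceFinset x, φ e := by
  rw [hT.sum_incidenceFinset, Multiset.count_bind]
  have hle := Multiset.sum_map_le_sum_map (s := T) (fun t ↦ -(t.ends.count x * M)) _ fun t ht ↦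
    t.neg_count_ends_mul_le_incidenceSum x (hchain t ht)
      fun e he ↦ hM e (t.walk.edges_subset_edgeSet he)
  refine le_trans (le_of_eq ?_) hle
  rw [Multiset.sum_map_neg, Multiset.sum_map_mul_right, Nat.cast_multiset_sum, Multiset.map_map]
  rfl

end IsTrailDecomposition

lemma exists_isTrailDecomposition_count_ends_eq_one [DecidableEq V] [G.LocallyFinite]
    (hodd : ∀ x, Odd (G.degree x)) :
    ∃ T : Multiset (NonemptyWalk G), IsTrailDecomposition T ∧
      ∀ x, (T.bind NonemptyWalk.ends).count x = 1 := by
  obtain ⟨T, hT, hle⟩ := exists_isTrailDecomposition_count_ends_le_two G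
  refine ⟨T, hT, fun x ↦ ?_⟩
  have heven := hT.even_degree_add_count_ends x
  grind

end Decomposition

/-! ### Balanced labelings -/

/-- The `i`-th term, counting from `0`, of the sequence `1, m, 2, m - 1, …`. -/
def zigzag (m i : ℕ) : ℕ := if Even i then i / 2 + 1 else m - i / 2

lemma bijOn_zigzag (m : ℕ) : Set.BijOn (zigzag m) (Set.Iio m) (Set.Icc 1 m) := by
  refine ⟨fun i hi ↦ ?_, fun i hi j hj hij ↦ ?_, fun a ⟨ha, ham⟩ ↦ ?_⟩
  · grind [zigzag]
  · grind [zigzag]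
  · by_cases h : 2 * (a - 1) < m
    · exact ⟨2 * (a - 1), h, by grind [zigzag]⟩
    · exact ⟨2 * (m - a) + 1, by grind, by grind [zigzag]⟩

lemma zigzag_add_zigzag_succ_mem {m i : ℕ} (hi : i + 1 < m) :
    zigzag m i + zigzag m (i + 1) ∈ Set.Icc (m + 1) (m + 2) := by
  grind [zigzag]

lemma bijOn_idxOf {α : Type*} [DecidableEq α] {L : List α} (hL : L.Nodup) :
    Set.BijOn L.idxOf {a | a ∈ L} (Set.Iio L.length) :=
  ⟨fun _ ha ↦ List.idxOf_lt_length_of_mem ha, fun _ ha _ _ hab ↦ (List.idxOf_inj ha).1 hab,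
    fun i hi ↦ ⟨L[i], L.getElem_mem hi, hL.idxOf_getElem i hi⟩⟩

lemma exists_bijOn_Icc_isChain {α : Type*} {L : List α} (hL : L.Nodup) :
    ∃ f : α → ℕ, Set.BijOn f {a | a ∈ L} (Set.Icc 1 L.length) ∧
      L.IsChain fun a b ↦ f a + f b ∈ Set.Icc (L.length + 1) (L.length + 2) := by
  classical
  refine ⟨zigzag L.length ∘ L.idxOf, (bijOn_zigzag _).comp (bijOn_idxOf hL), ?_⟩
  refine List.isChain_iff_getElem.2 fun i hi ↦ ?_
  simpa only [Function.comp_apply, hL.idxOf_getElem] using zigzag_add_zigzag_succ_mem hi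

section VertexSum
variable {V : Type*} [Finite V] (G : SimpleGraph V) (f : Sym2 V → ℕ) (v : V)
  [Fintype (G.neighborSet v)]

lemma vertexSum_eq_sum_incidenceFinset [DecidableEq V] :
    vertexSum G f v = ∑ e ∈ G.incidenceFinset v, f e := by
  rw [vertexSum]
  congr 1
  ext e
  simp

lemma vertexSum_eq_sum_neighborFinset :
    vertexSum G f v = ∑ w ∈ G.neighborFinset v, f s(v, w) := by
  classical
  rw [vertexSum_eq_sum_incidenceFinset]
  refine (sum_nbij (s(v, ·)) ?_ ?_ ?_ fun _ _ ↦ rfl).symm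
  · simp
  · exact fun a _ b _ hab ↦ Sym2.congr_right.1 hab
  · rintro _ he
    obtain ⟨hadj, w, rfl⟩ : _ ∈ G.incidenceSet v := by simpa using he
    exact ⟨w, by simpa using hadj, rfl⟩

lemma vertexSum_mul_add (a b : ℕ) :
    vertexSum G (fun e ↦ f e * a + b) v = vertexSum G f v * a + G.degree v * b := by
  simp [vertexSum_eq_sum_neighborFinset, sum_add_distrib, sum_mul]

end VertexSum

namespace IsTrailDecomposition
variable {V : Type*} {G : SimpleGraph V} [Fintype G.edgeSet] {T : Multiset (NonemptyWalk G)}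

lemma exists_bijOn_isChain (hT : IsTrailDecomposition T) : ∃ f : Sym2 V → ℕ,
    Set.BijOn f G.edgeSet (Set.Icc 1 #G.edgeFinset) ∧ ∀ t ∈ T, t.walk.edges.IsChain fun a b ↦
      f a + f b ∈ Set.Icc (#G.edgeFinset + 1) (#G.edgeFinset + 2) := by
  obtain ⟨ts, rfl⟩ := Quot.exists_rep T
  set L := ts.flatMap (·.walk.edges)
  have hL : (L : Multiset (Sym2 V)) = G.edgeFinset.val := by
    rw [← hT]
    exact (Multiset.coe_bind ts _).symm
  have hlength : L.length = #G.edgeFinset := by rw [← Multiset.coe_card, hL, Finset.card_val]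
  have hedges : {e | e ∈ L} = G.edgeSet := by
    ext e
    rw [Set.mem_ofPred_eq, ← Multiset.mem_coe, hL, Finset.mem_val, SimpleGraph.mem_edgeFinset]
  obtain ⟨f, hf, hchain⟩ :=
    exists_bijOn_Icc_isChain (Multiset.coe_nodup.1 (hL ▸ G.edgeFinset.nodup))
  rw [hlength] at hf hchain
  refine ⟨f, hedges ▸ hf, fun t ht ↦ hchain.infix ?_⟩
  exact List.infix_of_mem_flatten (List.mem_map_of_mem ht)

end IsTrailDecomposition

lemma two_mul_add_mul_lt_of_mul_eq_two_mul {n k m d : ℕ} (hn : 0 < n) (hm : n * k = 2 * m)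
    (hd : 2 * d + k ≤ k ^ 2) :
    2 * m + k + 2 * (d * n) < 2 * (k * m) + 2 * d + 3 := by
  obtain ⟨n, rfl⟩ := Nat.exists_eq_add_one.2 hn
  have hmul := Nat.mul_le_mul_left n hd
  have hsq : 2 * k ≤ k ^ 2 + 1 := by simpa using two_mul_le_add_sq k 1
  have hkm : 2 * (k * m) = (n + 1) * k ^ 2 := by
    rw [mul_left_comm, ← hm]
    ring
  grind

section Labelings
variable {V : Type*} (G : SimpleGraph V)

lemma exists_bijOn_edgeSet_Iio [Fintype G.edgeSet] :
    ∃ f : Sym2 V → ℕ, Set.BijOn f G.edgeSet (Set.Iio #G.edgeFinset) := by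
  classical
  refine ⟨G.edgeFinset.toList.idxOf, ?_⟩
  simpa using bijOn_idxOf G.edgeFinset.nodup_toList

lemma exists_bijOn_vertexSum_bounds [Finite V] [Fintype G.edgeSet] [G.LocallyFinite]
    (hodd : ∀ x, Odd (G.degree x)) :
    ∃ f : Sym2 V → ℕ, Set.BijOn f G.edgeSet (Set.Icc 1 #G.edgeFinset) ∧ ∀ x,
      G.degree x * (#G.edgeFinset + 1) + 1 ≤ 2 * vertexSum G f x + #G.edgeFinset ∧
      2 * vertexSum G f x + 2 ≤ G.degree x * (#G.edgeFinset + 2) + #G.edgeFinset := by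
  classical
  obtain ⟨T, hT, hends⟩ := exists_isTrailDecomposition_count_ends_eq_one hodd
  obtain ⟨f, hf, hchain⟩ := hT.exists_bijOn_isChain
  refine ⟨f, hf, fun x ↦ ?_⟩
  have hrange (e) (he : e ∈ G.edgeSet) : 1 ≤ f e ∧ f e ≤ #G.edgeFinset := hf.mapsTo he
  -- Labels of consecutive edges add up to `m + 1` or `m + 2`, with `m` the number of edges, so each
  -- of the two weights has a nonnegative sum on consecutive edges.
  have hlower := hT.neg_count_ends_mul_le_sum_incidenceFinset
    (φ := fun e ↦ 2 * (f e : ℤ) - (#G.edgeFinset + 1)) (M := #G.edgeFinset - 1)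
    (fun t ht ↦ (hchain t ht).imp fun a b hab ↦ by grind) (fun e he ↦ by grind) x
  have hupper := hT.neg_count_ends_mul_le_sum_incidenceFinset
    (φ := fun e ↦ (#G.edgeFinset + 2) - 2 * (f e : ℤ)) (M := #G.edgeFinset - 2)
    (fun t ht ↦ (hchain t ht).imp fun a b hab ↦ by grind) (fun e he ↦ by grind) x
  rw [hends, sum_sub_distrib, sum_const, ← mul_sum, G.card_incidenceFinset_eq_degree,
    ← Nat.cast_sum, ← vertexSum_eq_sum_incidenceFinset] at hlower hupper
  zify
  grind

lemma exists_bijOn_vertexSum_add_mul_card_lt [Fintype V] [Fintype G.edgeSet] [G.LocallyFinite]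
    {k : ℕ} (hreg : G.IsRegularOfDegree k) (hodd : Odd k) :
    ∃ f : Sym2 V → ℕ, Set.BijOn f G.edgeSet (Set.Icc 1 #G.edgeFinset) ∧
      ∀ x y d, 2 * d + k ≤ k ^ 2 →
        vertexSum G f x + d * Fintype.card V < vertexSum G f y + k * #G.edgeFinset + d := by
  classical
  obtain ⟨f, hf, hbounds⟩ := exists_bijOn_vertexSum_bounds G fun x ↦ hreg.degree_eq x ▸ hodd
  refine ⟨f, hf, fun x y d hd ↦ ?_⟩
  have hlower := (hbounds y).1
  have hupper := (hbounds x).2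
  rw [hreg.degree_eq] at hlower hupper
  have hn : 0 < Fintype.card V := Fintype.card_pos_iff.2 ⟨x⟩
  have hsum : Fintype.card V * k = 2 * #G.edgeFinset := by
    have hdegrees : ∑ v, G.degree v = 2 * #G.edgeFinset := by
      convert G.sum_degrees_eq_twice_card_edges
    simpa [hreg.degree_eq] using hdegrees
  have hgap := two_mul_add_mul_lt_of_mul_eq_two_mul hn hsum hd
  grind

end Labelings

/-! ### Labelings of box products -/

lemma exists_equiv_fin_le_of_le {V α : Type*} [Fintype V] [LinearOrder α] (f : V → α) :
    ∃ e : V ≃ Fin (Fintype.card V), ∀ ⦃x y⦄, e x ≤ e y → f x ≤ f y := by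
  let e := Fintype.equivFin V
  refine ⟨e.trans (Tuple.sort (f ∘ e.symm)).symm, fun x y hxy ↦ ?_⟩
  simpa using Tuple.monotone_sort (f ∘ e.symm) hxy

lemma bijOn_equiv_val {V : Type*} {n : ℕ} (e : V ≃ Fin n) :
    Set.BijOn (fun x ↦ (e x : ℕ)) Set.univ (Set.Iio n) :=
  ⟨fun x _ ↦ (e x).2, fun _ _ _ _ hxy ↦ e.injective (Fin.ext hxy),
    fun i hi ↦ ⟨e.symm ⟨i, hi⟩, trivial, by simp⟩⟩

lemma bijOn_mul_add (n m : ℕ) :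
    Set.BijOn (fun q : ℕ × ℕ ↦ q.1 * m + q.2) (Set.Iio n ×ˢ Set.Icc 1 m) (Set.Icc 1 (n * m)) := by
  refine ⟨?_, ?_, ?_⟩
  · rintro ⟨i, a⟩ ⟨hi : i < n, ha : 1 ≤ a, ham : a ≤ m⟩
    have : (i + 1) * m ≤ n * m := Nat.mul_le_mul_right m hi
    grind
  · rintro ⟨i, a⟩ ⟨-, ha : 1 ≤ a, ham : a ≤ m⟩ ⟨j, b⟩ ⟨-, hb : 1 ≤ b, hbm : b ≤ m⟩ hij
    have hlt {i j : ℕ} (h : i < j) : (i + 1) * m ≤ j * m := Nat.mul_le_mul_right m h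
    obtain h | rfl | h := lt_trichotomy i j
    · have := hlt h; grind
    · grind
    · have := hlt h; grind
  · rintro t ⟨ht, htn⟩
    have hm : 0 < m := Nat.pos_of_ne_zero (by rintro rfl; lia)
    refine ⟨((t - 1) / m, (t - 1) % m + 1), ⟨?_, ?_⟩, ?_⟩
    · exact (Nat.div_lt_iff_lt_mul hm).2 (by lia)
    · exact ⟨by lia, Nat.mod_lt _ hm⟩
    · have := Nat.div_add_mod' (t - 1) m
      grind

section BoxProd
variable {V₁ V₂ : Type*} {G₁ : SimpleGraph V₁} {G₂ : SimpleGraph V₂}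

open scoped Classical in
/-- The labeling of `G₁ □ G₂` that restricts to `left u` on the copy `G₁ × {u}` of `G₁` and to
`right x` on the copy `{x} × G₂` of `G₂`. The value `0` is taken only on pairs that are not edges
of any box product. -/
noncomputable def boxProdLabeling (left : V₂ → Sym2 V₁ → ℕ) (right : V₁ → Sym2 V₂ → ℕ) :
    Sym2 (V₁ × V₂) → ℕ :=
  Sym2.lift ⟨fun a b ↦ if a.2 = b.2 then left a.2 s(a.1, b.1)
    else if a.1 = b.1 then right a.1 s(a.2, b.2) else 0, fun a b ↦ by grind [Sym2.eq_swap]⟩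

section
variable (left : V₂ → Sym2 V₁ → ℕ) (right : V₁ → Sym2 V₂ → ℕ)

lemma boxProdLabeling_left (x y : V₁) (u : V₂) :
    boxProdLabeling left right s((x, u), (y, u)) = left u s(x, y) := by
  simp [boxProdLabeling]

lemma boxProdLabeling_right (x : V₁) {u w : V₂} (huw : u ≠ w) :
    boxProdLabeling left right s((x, u), (x, w)) = right x s(u, w) := by
  simp [boxProdLabeling, huw]

lemma vertexSum_boxProdLabeling [Finite V₁] [Finite V₂] (x : V₁) (u : V₂) :
    vertexSum (G₁ □ G₂) (boxProdLabeling left right) (x, u) =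
      vertexSum G₁ (left u) x + vertexSum G₂ (right x) u := by
  classical
  have := Fintype.ofFinite V₁
  have := Fintype.ofFinite V₂
  simp only [vertexSum_eq_sum_neighborFinset, SimpleGraph.neighborFinset_boxProd, sum_disjUnion,
    sum_product, sum_singleton, boxProdLabeling_left]
  congr 1
  refine sum_congr rfl fun w hw ↦ boxProdLabeling_right left right x ?_
  exact ((G₂.mem_neighborFinset u w).1 hw).ne

end

lemma edgeSet_boxProd : (G₁ □ G₂).edgeSet =
    (fun q : V₂ × Sym2 V₁ ↦ q.2.map (·, q.1)) '' (Set.univ ×ˢ G₁.edgeSet) ∪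
      (fun q : Sym2 V₂ × V₁ ↦ q.1.map (q.2, ·)) '' (G₂.edgeSet ×ˢ Set.univ) := by
  ext e
  constructor
  · induction e with | _ a b =>
    obtain ⟨x, u⟩ := a
    obtain ⟨y, w⟩ := b
    rintro (⟨hxy, rfl : u = w⟩ | ⟨huw, rfl : x = y⟩)
    · exact .inl ⟨(u, s(x, y)), ⟨trivial, hxy⟩, rfl⟩
    · exact .inr ⟨(s(u, w), x), ⟨huw, trivial⟩, rfl⟩
  · rintro (⟨⟨u, e⟩, ⟨-, he⟩, rfl⟩ | ⟨⟨e, x⟩, ⟨he, -⟩, rfl⟩)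
    · induction e with | _ x y => exact .inl ⟨he, rfl⟩
    · induction e with | _ u w => exact .inr ⟨he, rfl⟩

lemma bijOn_boxProdLabeling {left : V₂ → Sym2 V₁ → ℕ} {right : V₁ → Sym2 V₂ → ℕ} {S T : Set ℕ}
    (hleft : Set.BijOn (fun q : V₂ × Sym2 V₁ ↦ left q.1 q.2) (Set.univ ×ˢ G₁.edgeSet) S)
    (hright : Set.BijOn (fun q : Sym2 V₂ × V₁ ↦ right q.2 q.1) (G₂.edgeSet ×ˢ Set.univ) T)
    (hST : Disjoint S T) :
    Set.BijOn (boxProdLabeling left right) (G₁ □ G₂).edgeSet (S ∪ T) := by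
  rw [edgeSet_boxProd]
  have hL : Set.BijOn (boxProdLabeling left right)
      ((fun q : V₂ × Sym2 V₁ ↦ q.2.map (·, q.1)) '' (Set.univ ×ˢ G₁.edgeSet)) S := by
    have h := hleft.congr (f₂ := boxProdLabeling left right ∘ fun q ↦ q.2.map (·, q.1))
      fun ⟨u, e⟩ _ ↦ by
        induction e with | _ x y => exact (boxProdLabeling_left left right x y u).symm
    exact (Set.bijOn_comp_iff h.injOn.of_comp).1 h
  have hR : Set.BijOn (boxProdLabeling left right)
      ((fun q : Sym2 V₂ × V₁ ↦ q.1.map (q.2, ·)) '' (G₂.edgeSet ×ˢ Set.univ)) T := by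
    have h := hright.congr (f₂ := boxProdLabeling left right ∘ fun q ↦ q.1.map (q.2, ·))
      fun ⟨e, x⟩ he ↦ by
        induction e with | _ u w =>
        have huw : G₂.Adj u w := he.1
        exact (boxProdLabeling_right left right x huw.ne).symm
    exact (Set.bijOn_comp_iff h.injOn.of_comp).1 h
  refine hL.union hR ?_
  rintro a (ha | ha) b (hb | hb) hab
  · exact hL.injOn ha hb hab
  · exact (hST.ne_of_mem (hL.mapsTo ha) (hR.mapsTo hb) hab).elim
  · exact (hST.ne_of_mem (hL.mapsTo hb) (hR.mapsTo ha) hab.symm).elim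
  · exact hR.injOn ha hb hab

end BoxProd

section LayeredLabeling
variable {V₁ V₂ : Type*} {n₁ n₂ : ℕ} (m₁ m₂ : ℕ) (g : Sym2 V₁ → ℕ) (h : Sym2 V₂ → ℕ)
  (p : V₁ ≃ Fin n₁) (r : V₂ ≃ Fin n₂)

/-- The labeling of a box product in which the copies of the second factor receive the labels
`1, …, m₂ * n₁`, each edge of that factor using `n₁` consecutive ones in the order `p`, and the
copies of the first factor receive translates of `g`, stacked above these in the order `r`. Here
`m₁` and `m₂` stand for the numbers of edges of the factors. -/
noncomputable def layeredLabeling : Sym2 (V₁ × V₂) → ℕ :=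
  boxProdLabeling (fun u e ↦ m₂ * n₁ + (r u * m₁ + g e)) (fun x e ↦ h e * n₁ + (p x + 1))

variable {m₁ m₂ g h} in
lemma bijOn_layeredLabeling {G₁ : SimpleGraph V₁} {G₂ : SimpleGraph V₂}
    (hg : Set.BijOn g G₁.edgeSet (Set.Icc 1 m₁)) (hh : Set.BijOn h G₂.edgeSet (Set.Iio m₂)) :
    Set.BijOn (layeredLabeling m₁ m₂ g h p r) (G₁ □ G₂).edgeSet
      (Set.Icc 1 (m₂ * n₁ + n₂ * m₁)) := by
  have hshift (a b : ℕ) : Set.BijOn (a + ·) (Set.Icc 1 b) (Set.Icc (a + 1) (a + b)) := by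
    rw [← Set.image_const_add_Icc]
    exact (add_right_injective a).injOn.bijOn_image
  have hsucc : Set.BijOn (· + 1) (Set.Iio n₁) (Set.Icc 1 n₁) :=
    ⟨by grind [Set.MapsTo], by grind [Set.InjOn], fun i hi ↦ ⟨i - 1, by grind, by grind⟩⟩
  have hleft := (hshift (m₂ * n₁) (n₂ * m₁)).comp
    ((bijOn_mul_add n₂ m₁).comp ((bijOn_equiv_val r).prodMap hg))
  have hright := (bijOn_mul_add m₂ n₁).comp (hh.prodMap (hsucc.comp (bijOn_equiv_val p)))
  have hdisj : Disjoint (Set.Icc (m₂ * n₁ + 1) (m₂ * n₁ + n₂ * m₁)) (Set.Icc 1 (m₂ * n₁)) := by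
    grind
  have hunion : Set.Icc (m₂ * n₁ + 1) (m₂ * n₁ + n₂ * m₁) ∪ Set.Icc 1 (m₂ * n₁) =
      Set.Icc 1 (m₂ * n₁ + n₂ * m₁) := by
    grind
  exact hunion ▸ bijOn_boxProdLabeling hleft hright hdisj

lemma vertexSum_layeredLabeling [Finite V₁] [Finite V₂] (G₁ : SimpleGraph V₁)
    (G₂ : SimpleGraph V₂) [G₁.LocallyFinite] [G₂.LocallyFinite] (x : V₁) (u : V₂) :
    vertexSum (G₁ □ G₂) (layeredLabeling m₁ m₂ g h p r) (x, u) =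
      vertexSum G₁ g x + G₁.degree x * (m₂ * n₁ + r u * m₁) +
        (vertexSum G₂ h u * n₁ + G₂.degree u * (p x + 1)) := by
  rw [layeredLabeling, vertexSum_boxProdLabeling, vertexSum_mul_add]
  congr 1
  simpa [add_comm, add_assoc, add_left_comm] using vertexSum_mul_add G₁ g x 1 (m₂ * n₁ + r u * m₁)

section Injective
variable {m₁ m₂ g h p r} [Finite V₁] [Finite V₂] {G₁ : SimpleGraph V₁} {G₂ : SimpleGraph V₂}
  [G₁.LocallyFinite] [G₂.LocallyFinite] {k : ℕ}

lemma vertexSum_layeredLabeling_lt_of_right_eq (hreg : G₁.IsRegularOfDegree k)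
    {x y : V₁} (hle : vertexSum G₁ g x ≤ vertexSum G₁ g y) (hxy : p x < p y) {u : V₂}
    (hu : 1 ≤ G₂.degree u) :
    vertexSum (G₁ □ G₂) (layeredLabeling m₁ m₂ g h p r) (x, u) <
      vertexSum (G₁ □ G₂) (layeredLabeling m₁ m₂ g h p r) (y, u) := by
  simp only [vertexSum_layeredLabeling, hreg.degree_eq]
  have hlt : G₂.degree u * (p x + 1) < G₂.degree u * (p y + 1) := by
    gcongr
    exact hxy
  lia

lemma vertexSum_layeredLabeling_lt_of_right_lt (hreg : G₁.IsRegularOfDegree k)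
    {x y : V₁} {u w : V₂}
    (hle : n₁ * vertexSum G₂ h u + G₂.degree u ≤ n₁ * vertexSum G₂ h w + G₂.degree w)
    (huw : r u < r w)
    (hgap : vertexSum G₁ g x + G₂.degree u * n₁ < vertexSum G₁ g y + k * m₁ + G₂.degree u) :
    vertexSum (G₁ □ G₂) (layeredLabeling m₁ m₂ g h p r) (x, u) <
      vertexSum (G₁ □ G₂) (layeredLabeling m₁ m₂ g h p r) (y, w) := by
  simp only [vertexSum_layeredLabeling, hreg.degree_eq]
  have hlayer : k * (r u * m₁ + m₁) ≤ k * (r w * m₁) := by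
    rw [← Nat.succ_mul]
    gcongr
    exact huw
  have hpx : G₂.degree u * (p x + 1) ≤ G₂.degree u * n₁ := by
    gcongr
    exact (p x).2
  have hpy : G₂.degree w ≤ G₂.degree w * (p y + 1) := Nat.le_mul_of_pos_right _ (Nat.succ_pos _)
  grind

lemma injective_vertexSum_layeredLabeling (hreg : G₁.IsRegularOfDegree k)
    (hp : ∀ ⦃x y⦄, p x ≤ p y → vertexSum G₁ g x ≤ vertexSum G₁ g y)
    (hr : ∀ ⦃u w⦄, r u ≤ r w →
      n₁ * vertexSum G₂ h u + G₂.degree u ≤ n₁ * vertexSum G₂ h w + G₂.degree w)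
    (hmin : ∀ u, 1 ≤ G₂.degree u)
    (hgap : ∀ x y u,
      vertexSum G₁ g x + G₂.degree u * n₁ < vertexSum G₁ g y + k * m₁ + G₂.degree u) :
    Function.Injective (vertexSum (G₁ □ G₂) (layeredLabeling m₁ m₂ g h p r)) := by
  rintro ⟨x, u⟩ ⟨y, w⟩ hsum
  obtain huw | huw | hwu := lt_trichotomy (r u) (r w)
  · exact absurd hsum (vertexSum_layeredLabeling_lt_of_right_lt hreg (hr huw.le) huw (hgap ..)).ne
  · obtain rfl := r.injective huw
    obtain hxy | hxy | hyx := lt_trichotomy (p x) (p y)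
    · exact absurd hsum (vertexSum_layeredLabeling_lt_of_right_eq hreg (hp hxy.le) hxy (hmin u)).ne
    · rw [p.injective hxy]
    · exact absurd hsum (vertexSum_layeredLabeling_lt_of_right_eq hreg (hp hyx.le) hyx (hmin u)).ne'
  · exact absurd hsum (vertexSum_layeredLabeling_lt_of_right_lt hreg (hr hwu.le) hwu (hgap ..)).ne'

end Injective

end LayeredLabeling

lemma isAntimagic_of_bijOn_of_injective {V : Type*} [Finite V] {G : SimpleGraph V}
    {f : Sym2 V → ℕ} {m : ℕ} (hf : Set.BijOn f G.edgeSet (Set.Icc 1 m))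
    (hinj : Function.Injective (vertexSum G f)) : IsAntimagic G := by
  have hcard : Nat.card G.edgeSet = m := by simpa using Nat.card_congr (hf.equiv f)
  exact ⟨f, hcard ▸ hf, fun u v huv ↦ hinj.ne huv⟩

theorem boxProd_antimagic_odd_connected_general {V₁ V₂ : Type*} [Finite V₁] [Finite V₂]
    {k₁ k₂ : ℕ} (G₁ : SimpleGraph V₁) (G₂ : SimpleGraph V₂)
    (hreg : ∀ v : V₁, Nat.card (G₁.neighborSet v) = k₁) (hodd : Odd k₁)
    (hmax : ∀ v : V₂, Nat.card (G₂.neighborSet v) ≤ k₂)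
    (hmin : ∀ v : V₂, 1 ≤ Nat.card (G₂.neighborSet v))
    (hineq : k₂ ≤ (k₁ ^ 2 - k₁) / 2) :
    IsAntimagic (G₁ □ G₂) := by
  classical
  have := Fintype.ofFinite V₁
  have := Fintype.ofFinite V₂
  simp only [Nat.card_eq_fintype_card, SimpleGraph.card_neighborSet_eq_degree] at hreg hmax hmin
  have hdeg (u : V₂) : 2 * G₂.degree u + k₁ ≤ k₁ ^ 2 := by
    have := hmax u
    have := Nat.le_self_pow two_ne_zero k₁
    lia
  obtain ⟨g, hg, hgap⟩ := exists_bijOn_vertexSum_add_mul_card_lt G₁ hreg hodd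
  obtain ⟨h, hh⟩ := exists_bijOn_edgeSet_Iio G₂
  obtain ⟨p, hp⟩ := exists_equiv_fin_le_of_le (vertexSum G₁ g)
  obtain ⟨r, hr⟩ := exists_equiv_fin_le_of_le fun u ↦
    Fintype.card V₁ * vertexSum G₂ h u + G₂.degree u
  exact isAntimagic_of_bijOn_of_injective (bijOn_layeredLabeling p r hg hh)
    (injective_vertexSum_layeredLabeling hreg hp hr hmin fun x y u ↦ hgap x y _ (hdeg u))

/-- If `G₁` is a connected `k₁`-regular graph with `k₁` odd, `G₂` has maximum degree
at most `k₂` and minimum degree at least `1`, and `(k₁² − k₁)/2 ≥ k₂`, then the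
Cartesian product `G₁ □ G₂` is antimagic. -/
theorem boxProd_antimagic_odd_connected {V₁ V₂ : Type} [Finite V₁] [Finite V₂]
    {n₁ k₁ k₂ : ℕ} (G₁ : SimpleGraph V₁) (G₂ : SimpleGraph V₂)
    (hn₁ : Nat.card V₁ = n₁)
    (hreg : ∀ v : V₁, Nat.card (G₁.neighborSet v) = k₁)
    (hodd : Odd k₁) (hconn : G₁.Connected)
    (hmax : ∀ v : V₂, Nat.card (G₂.neighborSet v) ≤ k₂)
    (hmin : ∀ v : V₂, 1 ≤ Nat.card (G₂.neighborSet v))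
    (hineq : k₂ ≤ (k₁ ^ 2 - k₁) / 2) :
    IsAntimagic (G₁ □ G₂) :=
  boxProd_antimagic_odd_connected_general G₁ G₂ hreg hodd hmax hmin hineq
end

section
/- Let G be a k-regular finite simple graph on n vertices (not necessarily connected), where k ≥ 2 is even. Then G is (2n/3 + k − 1)-approximately magic; that is, there exists a bijection f from the edge set of G to {1, 2, ..., nk/2} such that the difference D between the largest vertex sum and the smallest vertex sum satisfies D ≤ 2n/3 + k − 1 (equivalently, 3·D ≤ 2n + 3(k − 1)). -/
/-!
By Petersen's theorem (orient the graph with equal in- and out-degrees and apply Hall's theorem) it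
splits into `r = k / 2` oriented `2`-factors, i.e. permutations `π i` of the vertices such that
every edge is `{v, π i v}` for exactly one pair `(i, v)`. Give the edges of the `i`-th factor the
labels of the `i`-th block of `n` consecutive integers, the edge leaving `v` getting the one of rank
`y i v`, counted from `0`. Up to a constant, the vertex sum at `v` is then the sum over `i` of the
imbalances `y i v + y i ((π i)⁻¹ v) - (n - 1)`.

Two factors `π` and `ρ` labelled in opposite orders nearly cancel: what remains is the difference
of the ranks of `π⁻¹ v` and `ρ⁻¹ v`, and it is at most `2` when the vertices are ranked along the
cycles of `ρ⁻¹ * π`, each cycle being folded in half. If `r` is odd, the last factor is labelled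
alone: its cycles are centred at `0` and arranged symmetrically on levels, consecutive vertices
being on nearly opposite levels, and each of its at most `n / 3` cycles contributes at most `1` to
the imbalance, which is where the term `2 * n / 3` comes from.
-/

open Function Finset

theorem not_sameCycle_apply_of_involutive {X : Type*} {σ τ : Equiv.Perm X}
    (hσ : Involutive σ) (hτ : Involutive τ) (σ_ne : ∀ x, σ x ≠ x) (τ_ne : ∀ x, τ x ≠ x) (x : X) :
    ¬ (σ * τ).SameCycle x (σ x) := by
  set ρ := σ * τ with hρ
  have semiconj : SemiconjBy σ ρ ρ⁻¹ := by
    ext y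
    simp only [Equiv.Perm.mul_apply, hρ, Equiv.Perm.eq_inv_iff_eq, hσ (τ y), hτ y]
  rintro ⟨k, hk⟩
  -- `σ * ρ ^ k` fixes `x` but is conjugate, by a power of `ρ`, to `σ` or `σ * ρ = τ`.
  have reflect (j : ℤ) : σ ((ρ ^ (k - j)) x) = (ρ ^ j) x := by
    have := DFunLike.congr_fun (semiconj.zpow_right (k - j)) x
    simp only [Equiv.Perm.mul_apply, ← hk] at this
    rw [this, ← Equiv.Perm.mul_apply, inv_zpow', ← zpow_add]
    congr 2
    ring
  rcases Int.even_or_odd' k with ⟨j, rfl | rfl⟩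
  · refine σ_ne ((ρ ^ j) x) ?_
    simpa only [two_mul, add_sub_cancel_right] using reflect j
  · refine τ_ne ((ρ ^ j) x) ?_
    have := reflect j
    rwa [show 2 * j + 1 - j = 1 + j by ring, zpow_one_add, Equiv.Perm.mul_apply, hρ,
      Equiv.Perm.mul_apply, hσ] at this

theorem exists_set_swapped_by_involutions {X : Type*} {σ τ : X → X}
    (hσ : Involutive σ) (hτ : Involutive τ) (σ_ne : ∀ x, σ x ≠ x) (τ_ne : ∀ x, τ x ≠ x) :
    ∃ S : Set X, ∀ x, (σ x ∈ S ↔ x ∉ S) ∧ (τ x ∈ S ↔ x ∉ S) := by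
  classical
  let ρ := hσ.toPerm * hτ.toPerm
  let Q := Quotient (Equiv.Perm.SameCycle.setoid ρ)
  let _ : LinearOrder Q := linearOrderOfSTO WellOrderingRel
  let q (x : X) : Q := Quotient.mk _ x
  have q_eq_iff (x y : X) : q x = q y ↔ ρ.SameCycle x y := Quotient.eq
  have q_ne (x : X) : q x ≠ q (σ x) := by
    rw [Ne, q_eq_iff]
    exact not_sameCycle_apply_of_involutive (σ := hσ.toPerm) (τ := hτ.toPerm) hσ hτ σ_ne τ_ne x
  have q_στ (x : X) : q (σ (τ x)) = q x :=
    (q_eq_iff _ _).2 (Equiv.Perm.sameCycle_apply_left.2 (Equiv.Perm.SameCycle.refl ρ x))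
  have q_τ (x : X) : q (τ x) = q (σ x) := by
    rw [← q_στ (τ x), hτ x]
  -- `σ` and `τ` both exchange each cycle of `ρ` with the same other one: keep one of the two.
  refine ⟨{x | q x < q (σ x)}, fun x => ?_⟩
  have swap : q (σ x) < q x ↔ ¬ q x < q (σ x) := by
    rw [not_lt, (q_ne x).symm.le_iff_lt]
  exact ⟨by simpa [hσ x] using swap, by simpa [q_στ, q_τ] using swap⟩

theorem exists_fixedPointFree_involution {α : Type*} [Finite α] (h : Even (Nat.card α)) :
    ∃ τ : α → α, Involutive τ ∧ ∀ x, τ x ≠ x := by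
  obtain ⟨r, hr⟩ := h
  let e : α ≃ Fin r ⊕ Fin r := (Finite.equivFinOfCardEq hr).trans finSumFinEquiv.symm
  refine ⟨fun x => e.symm (e x).swap, fun x => by simp, fun x hx => ?_⟩
  rw [e.symm_apply_eq] at hx
  cases hx' : e x <;> simp [hx'] at hx

theorem exists_fixedPointFree_involution_of_even_fibers {X V : Type*} [Finite X] (p : X → V)
    (h : ∀ v, Even (Nat.card {x // p x = v})) :
    ∃ τ : X → X, Involutive τ ∧ (∀ x, τ x ≠ x) ∧ ∀ x, p (τ x) = p x := by
  choose t ht t_ne using fun v => exists_fixedPointFree_involution (h v)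
  let τ (x : X) : X := t (p x) ⟨x, rfl⟩
  have τ_coe {v : V} (y : {x // p x = v}) : τ y = t v y := by
    obtain ⟨x, rfl⟩ := y
    rfl
  refine ⟨τ, fun x => ?_, fun x hx => t_ne _ ⟨x, rfl⟩ (Subtype.ext hx), fun x => (t _ _).2⟩
  rw [τ_coe, ht]

theorem exists_eulerian_orientation {V : Type*} [Fintype V] [DecidableEq V] (G : SimpleGraph V)
    [DecidableRel G.Adj] (h : ∀ v, Even (G.degree v)) :
    ∃ S : Finset G.Dart, (∀ d, d.symm ∈ S ↔ d ∉ S) ∧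
      ∀ v, 2 * #{d ∈ S | d.fst = v} = G.degree v ∧ 2 * #{d ∈ S | d.snd = v} = G.degree v := by
  classical
  obtain ⟨τ, hτ, τ_ne, fst_τ⟩ :=
    exists_fixedPointFree_involution_of_even_fibers (fun d : G.Dart => d.fst) fun v => by
      rw [Nat.card_eq_fintype_card, Fintype.card_subtype, G.dart_fst_fiber_card_eq_degree]
      exact h v
  obtain ⟨S, hS⟩ := exists_set_swapped_by_involutions SimpleGraph.Dart.symm_involutive hτ
    SimpleGraph.Dart.symm_ne τ_ne
  refine ⟨S.toFinset, fun d => by simpa using (hS d).1, fun v => ?_⟩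
  have out_eq_in : #{d ∈ S.toFinset | d.snd = v} = #{d : G.Dart | d.fst = v ∧ d ∉ S} :=
    card_bijective _ SimpleGraph.Dart.symm_involutive.bijective fun d => by
      simp [(hS d).1, and_comm]
  have out_eq_compl : #{d ∈ S.toFinset | d.fst = v} = #{d : G.Dart | d.fst = v ∧ d ∉ S} :=
    card_bijective _ hτ.bijective fun d => by
      simp [(hS d).2, and_comm, fst_τ]
  have split := card_filter_add_card_filter_not (s := {d : G.Dart | d.fst = v}) (· ∈ S)
  rw [G.dart_fst_fiber_card_eq_degree, filter_filter, filter_filter] at split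
  have out_eq : #{d ∈ S.toFinset | d.fst = v} = #{d : G.Dart | d.fst = v ∧ d ∈ S} := by
    congr 1
    ext d
    simp [and_comm]
  omega

section Transversals

variable {X V : Type*} [DecidableEq V] {E : Finset X} {r : ℕ}

theorem card_fiber_filter_notMem_range {p : X → V} {g : V → X} [DecidablePred (· ∈ Set.range g)]
    (hp : ∀ v, #{x ∈ E | p x = v} = r + 1) (hg : ∀ v, g v ∈ E) (hpg : Bijective (p ∘ g)) (v : V) :
    #{x ∈ {x ∈ E | x ∉ Set.range g} | p x = v} = r := by
  classical
  obtain ⟨w, rfl⟩ := hpg.surjective v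
  have fiber_eq_erase : {x ∈ {x ∈ E | x ∉ Set.range g} | p x = (p ∘ g) w} =
      {x ∈ E | p x = (p ∘ g) w}.erase (g w) := by
    ext x
    simp only [mem_filter, mem_erase]
    refine ⟨fun ⟨⟨hx, hxg⟩, hpx⟩ => ⟨fun h => hxg ⟨w, h.symm⟩, hx, hpx⟩,
      fun ⟨hxw, hx, hpx⟩ => ⟨⟨hx, ?_⟩, hpx⟩⟩
    rintro ⟨u, rfl⟩
    exact hxw (congrArg g (hpg.injective hpx))
  rw [fiber_eq_erase, card_erase_of_mem (by simp [hg]), hp, Nat.add_sub_cancel]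

variable [Finite V]

theorem exists_transversal_of_regular {s t : X → V} (hr : 0 < r)
    (hs : ∀ v, #{x ∈ E | s x = v} = r) (ht : ∀ v, #{x ∈ E | t x = v} = r) :
    ∃ g : V → X, (∀ v, g v ∈ E) ∧ (∀ v, s (g v) = v) ∧ Bijective (t ∘ g) := by
  classical
  have card_preimage {p : X → V} (hp : ∀ v, #{x ∈ E | p x = v} = r) (A : Finset V) :
      #{x ∈ E | p x ∈ A} = #A * r := by
    rw [← sum_card_fiberwise_eq_card_filter, sum_congr rfl fun v _ => hp v, sum_const,
      smul_eq_mul]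
  have hall (A : Finset V) : #A ≤ #(A.biUnion fun v => image t {x ∈ E | s x = v}) := by
    refine Nat.le_of_mul_le_mul_right ?_ hr
    rw [← card_preimage hs, ← card_preimage ht]
    refine card_le_card fun x hx => ?_
    simp only [mem_filter, mem_biUnion, mem_image] at hx ⊢
    exact ⟨hx.1, s x, hx.2, x, ⟨hx.1, rfl⟩, rfl⟩
  obtain ⟨f, f_inj, hf⟩ := (all_card_le_biUnion_card_iff_exists_injective _).1 hall
  simp only [mem_image, mem_filter] at hf
  choose g hg htg using hf
  refine ⟨g, fun v => (hg v).1, fun v => (hg v).2, Finite.injective_iff_bijective.1 ?_⟩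
  rwa [show t ∘ g = f from funext htg]

theorem exists_transversals_of_regular {s t : X → V} (hs : ∀ v, #{x ∈ E | s x = v} = r)
    (ht : ∀ v, #{x ∈ E | t x = v} = r) :
    ∃ g : Fin r → V → X, Set.BijOn (fun x : Fin r × V => g x.1 x.2) Set.univ E ∧
      (∀ i v, s (g i v) = v) ∧ ∀ i, Bijective (t ∘ g i) := by
  classical
  induction r generalizing E with
  | zero =>
    have : E = ∅ := eq_empty_of_forall_notMem fun x hx =>
      filter_eq_empty_iff.1 (card_eq_zero.1 (hs (s x))) hx rfl
    refine ⟨Fin.elim0, ?_, Fin.rec0, Fin.rec0⟩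
    simp [this, Set.BijOn, Set.MapsTo, Set.InjOn, Set.SurjOn]
  | succ r ih =>
    obtain ⟨g₀, hg₀, hsg₀, htg₀⟩ := exists_transversal_of_regular r.succ_pos hs ht
    have hsg₀_bij : Bijective (s ∘ g₀) := by
      rw [show s ∘ g₀ = id from funext hsg₀]
      exact bijective_id
    obtain ⟨g, ⟨g_maps, g_inj, g_surj⟩, hsg, htg⟩ :=
      ih (card_fiber_filter_notMem_range hs hg₀ hsg₀_bij)
        (card_fiber_filter_notMem_range ht hg₀ htg₀)
    have g_mem (i : Fin r) (v : V) : g i v ∈ E ∧ g i v ∉ Set.range g₀ :=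
      mem_filter.1 (g_maps (Set.mem_univ (i, v)))
    refine ⟨Fin.cons g₀ g, ⟨?_, ?_, ?_⟩, Fin.cases hsg₀ hsg, Fin.cases htg₀ htg⟩
    · rintro ⟨i, v⟩ -
      cases i using Fin.cases with
      | zero => exact hg₀ v
      | succ i => exact (g_mem i v).1
    · rintro ⟨i, v⟩ - ⟨j, w⟩ - h
      cases i using Fin.cases <;> cases j using Fin.cases
      · rw [show v = w by simpa [hsg₀] using congrArg s h]
      · exact absurd ⟨v, h⟩ (g_mem _ w).2
      · exact absurd ⟨w, h.symm⟩ (g_mem _ v).2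
      · simpa using g_inj (Set.mem_univ (_, v)) (Set.mem_univ (_, w)) h
    · intro x hx
      by_cases hxg : x ∈ Set.range g₀
      · obtain ⟨v, rfl⟩ := hxg
        exact ⟨(0, v), Set.mem_univ _, rfl⟩
      · obtain ⟨⟨i, v⟩, -, hiv⟩ := g_surj (mem_coe.2 (mem_filter.2 ⟨hx, hxg⟩))
        exact ⟨(i.succ, v), Set.mem_univ _, hiv⟩

end Transversals

/-- A factorization of `G` into `2`-factors, indexed by `ι`, each given with an orientation of its
cycles: `π i v` is the successor of `v` on the `i`-th factor, so that every edge of `G` is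
`s(v, π i v)` for exactly one pair `(i, v)`. -/
def IsTwoFactorization {V ι : Type*} (G : SimpleGraph V) (π : ι → Equiv.Perm V) : Prop :=
  Set.BijOn (fun x : ι × V => s(x.2, π x.1 x.2)) Set.univ G.edgeSet

theorem bijOn_edge_of_symm_mem_iff {V : Type*} {G : SimpleGraph V} {S : Set G.Dart}
    (hS : ∀ d, d.symm ∈ S ↔ d ∉ S) : Set.BijOn SimpleGraph.Dart.edge S G.edgeSet := by
  refine ⟨fun d _ => d.edge_mem, fun d hd d' hd' h => ?_, fun e he => ?_⟩
  · refine ((SimpleGraph.dart_edge_eq_iff d d').1 h).resolve_right fun hsymm => ?_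
    exact (hS d').1 (hsymm ▸ hd) hd'
  · induction e with | _ u v
    let d : G.Dart := ⟨(u, v), he⟩
    by_cases hd : d ∈ S
    · exact ⟨d, hd, rfl⟩
    · exact ⟨d.symm, (hS d).2 hd, d.edge_symm⟩

theorem exists_isTwoFactorization {V : Type*} [Finite V] {r : ℕ} (G : SimpleGraph V)
    (hreg : ∀ v, Nat.card (G.neighborSet v) = 2 * r) :
    ∃ π : Fin r → Equiv.Perm V, IsTwoFactorization G π := by
  classical
  have := Fintype.ofFinite V
  have hdeg (v : V) : G.degree v = 2 * r := by
    rw [← hreg, Nat.card_eq_fintype_card, G.card_neighborSet_eq_degree]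
  obtain ⟨S, hS, hhalf⟩ := exists_eulerian_orientation G fun v => by simp [hdeg]
  simp only [hdeg, Nat.mul_left_cancel_iff two_pos] at hhalf
  obtain ⟨g, g_bij, fst_g, snd_g⟩ :=
    exists_transversals_of_regular (fun v => (hhalf v).1) fun v => (hhalf v).2
  refine ⟨fun i => Equiv.ofBijective _ (snd_g i), ?_⟩
  refine ((bijOn_edge_of_symm_mem_iff hS).comp g_bij).congr fun ⟨i, v⟩ _ => ?_
  exact congrArg (fun u => s(u, (g i v).snd)) (fst_g i v)

namespace IsTwoFactorization

variable {V ι : Type*} {G : SimpleGraph V} {π : ι → Equiv.Perm V}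

theorem apply_ne (h : IsTwoFactorization G π) (i : ι) (v : V) : π i v ≠ v :=
  (show G.Adj v (π i v) from h.mapsTo (Set.mem_univ (i, v))).ne'

theorem apply_apply_ne (h : IsTwoFactorization G π) (i : ι) (v : V) : π i (π i v) ≠ v := by
  intro hv
  have same_edge : s(π i v, π i (π i v)) = s(v, π i v) := by rw [hv, Sym2.eq_swap]
  have := h.injOn (Set.mem_univ (i, π i v)) (Set.mem_univ (i, v)) same_edge
  exact h.apply_ne i v (congrArg Prod.snd this)

theorem vertexSum_eq_sum [Finite V] [Fintype ι] (h : IsTwoFactorization G π) (f : Sym2 V → ℕ)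
    (v : V) :
    vertexSum G f v = ∑ i, (f s(v, π i v) + f s((π i).symm v, v)) := by
  classical
  have := Fintype.ofFinite V
  have incidence_eq : (G.incidenceSet v).toFinite.toFinset =
      ({x : ι × V | x.2 = v ∨ π x.1 x.2 = v} : Finset _).image fun x => s(x.2, π x.1 x.2) := by
    ext e
    simp only [Set.Finite.mem_toFinset, SimpleGraph.incidenceSet, Set.mem_ofPred_eq, mem_image,
      ← h.image_eq, mem_filter_univ, Set.mem_image, Set.mem_univ, true_and]
    constructor
    · rintro ⟨⟨x, rfl⟩, hv⟩
      exact ⟨x, by simpa [eq_comm] using hv, rfl⟩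
    · rintro ⟨x, hv, rfl⟩
      exact ⟨⟨x, rfl⟩, by simpa [eq_comm] using hv⟩
  have incident_factor (i : ι) :
      ({x | x = v ∨ π i x = v} : Finset V) = {v, (π i).symm v} := by
    ext x
    simp [Equiv.eq_symm_apply]
  rw [vertexSum, incidence_eq, sum_image (h.injOn.mono (Set.subset_univ _)), sum_filter,
    Fintype.sum_prod_type]
  refine sum_congr rfl fun i _ => ?_
  rw [← sum_filter, incident_factor, sum_pair, Equiv.apply_symm_apply]
  rw [Ne, Equiv.eq_symm_apply]
  exact h.apply_ne i v

theorem exists_edgeLabeling [Fintype V] {r : ℕ} {π : Fin r → Equiv.Perm V}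
    (h : IsTwoFactorization G π) (y : Fin r → V ≃ Fin (Fintype.card V)) :
    ∃ f : Sym2 V → ℕ, Set.BijOn f G.edgeSet (Set.Icc 1 (r * Fintype.card V)) ∧
      ∀ i v, f s(v, π i v) = Fintype.card V * i + y i v + 1 := by
  let label : Fin r × V ≃ Fin (r * Fintype.card V) :=
    (Equiv.prodCongrRight y).trans finProdFinEquiv
  have succ_bijOn (N : ℕ) : Set.BijOn (fun j : Fin N => (j : ℕ) + 1) Set.univ (Set.Icc 1 N) :=
    ⟨fun j _ => ⟨by simp, j.isLt⟩, fun i _ j _ hij => Fin.ext (Nat.succ.inj hij),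
      fun m hm => ⟨⟨m - 1, by grind⟩, trivial, by grind⟩⟩
  let edge (x : Fin r × V) : Sym2 V := s(x.2, π x.1 x.2)
  have edge_inj : Injective edge := Set.injOn_univ.1 h.injOn
  refine ⟨extend edge (fun x => (label x : ℕ) + 1) 0, ?_, fun i v => ?_⟩
  · rw [← h.image_eq, ← Set.bijOn_comp_iff h.injOn, extend_comp edge_inj]
    exact (succ_bijOn _).comp label.bijective.bijOn_univ
  · refine (edge_inj.extend_apply _ _ (i, v)).trans ?_
    simp [label, finProdFinEquiv_apply_val, add_comm]

end IsTwoFactorization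

/-- The amount by which the sum of the two labels at `v` in the `2`-factor `π` exceeds the average
value of such a sum, when the edge leaving `w` has label `y w`, counted from `0`: the edges at `v`
then have labels `y v` and `y (π.symm v)`. -/
def imbalance {V : Type*} [Fintype V] (π : Equiv.Perm V) (y : V ≃ Fin (Fintype.card V)) (v : V) :
    ℤ :=
  y v + y (π.symm v) - (Fintype.card V - 1)

theorem IsTwoFactorization.exists_edgeLabeling_vertexSum {V : Type*} [Fintype V]
    {G : SimpleGraph V} {r : ℕ} {π : Fin r → Equiv.Perm V} (h : IsTwoFactorization G π)
    (y : Fin r → V ≃ Fin (Fintype.card V)) :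
    ∃ f : Sym2 V → ℕ, Set.BijOn f G.edgeSet (Set.Icc 1 (r * Fintype.card V)) ∧
      ∃ c : ℤ, ∀ v, (vertexSum G f v : ℤ) = c + ∑ i, imbalance (π i) (y i) v := by
  obtain ⟨f, f_bij, hf⟩ := h.exists_edgeLabeling y
  have f_in (i : Fin r) (v : V) :
      f s((π i).symm v, v) = Fintype.card V * i + y i ((π i).symm v) + 1 := by
    rw [← hf, Equiv.apply_symm_apply]
  refine ⟨f, f_bij, ∑ i : Fin r, (2 * Fintype.card V * i + Fintype.card V + 1 : ℤ), fun v => ?_⟩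
  rw [h.vertexSum_eq_sum, Nat.cast_sum, ← sum_add_distrib]
  refine sum_congr rfl fun i _ => ?_
  rw [hf, f_in, imbalance]
  push_cast
  ring

theorem exists_sigma_zmod_equiv.{u} {V : Type u} [Finite V] (π : Equiv.Perm V) :
    ∃ (ι : Type u) (l : ι → ℕ) (e : (Σ i, ZMod (l i)) ≃ V), (∀ i, l i ≠ 0) ∧
      ∀ i z, e ⟨i, z + 1⟩ = π (e ⟨i, z⟩) := by
  let e := (Equiv.sigmaCongrRight fun ω : MulAction.orbitRel.Quotient (Subgroup.zpowers π) V =>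
      (MulAction.orbitZPowersEquiv π ω.out).symm).trans
    (MulAction.selfEquivSigmaOrbits (Subgroup.zpowers π) V).symm
  have e_intCast (ω) (k : ℤ) : e ⟨ω, k⟩ = (π ^ k) ω.out :=
    congrArg Subtype.val (MulAction.orbitZPowersEquiv_symm_apply' π ω.out k)
  refine ⟨_, _, e, fun ω => NeZero.ne _, fun ω z => ?_⟩
  obtain ⟨k, rfl⟩ := ZMod.intCast_surjective z
  rw [← Int.cast_one, ← Int.cast_add, e_intCast, e_intCast, add_comm, zpow_one_add,
    Equiv.Perm.mul_apply]

/-- The place of position `p` of a cycle of length `l` when its positions `0, …, l - 1` are put, in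
this order, on integers symmetric about `0`; if `l` is even, then `0` is left out. -/
def centeredOffset (l p : ℕ) : ℤ :=
  if 2 * p < l then (p : ℤ) - (l / 2 : ℕ) else p - ((l - 1) / 2 : ℕ)

theorem centeredOffset_injective (l : ℕ) : Injective (centeredOffset l) := by
  intro p q h
  simp only [centeredOffset] at h
  split_ifs at h <;> omega

theorem centeredOffset_reflect {l p : ℕ} (hp : p < l) :
    centeredOffset l (l - 1 - p) = -centeredOffset l p := by
  simp only [centeredOffset]
  split_ifs <;> omega

theorem centeredOffset_succ_mod {l p : ℕ} (hp : p < l) :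
    centeredOffset l ((p + 1) % l) = centeredOffset l p + 1 ∨
      centeredOffset l ((p + 1) % l) = -centeredOffset l p := by
  rcases (Nat.succ_le_of_lt hp).lt_or_eq with hlt | rfl
  · rw [Nat.mod_eq_of_lt hlt]
    simp only [centeredOffset]
    split_ifs <;> omega
  · right
    rw [← centeredOffset_reflect hp, Nat.mod_self]
    simp

theorem exists_centered_coordinates {V : Type*} [Finite V] (π : Equiv.Perm V) :
    ∃ c A : V → ℤ, Injective (fun v => (c v, A v)) ∧
      (∀ v, c (π v) = c v ∧ (A (π v) = A v + 1 ∨ A (π v) = -A v)) ∧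
      ∀ v, ∃ w, c w = c v ∧ A w = -A v := by
  obtain ⟨ι, l, e, hl, he⟩ := exists_sigma_zmod_equiv π
  have (i : ι) : NeZero (l i) := ⟨hl i⟩
  have : Finite ι := Finite.of_injective (fun i => e ⟨i, 0⟩) fun i j h =>
    congrArg Sigma.fst (e.injective h)
  obtain ⟨code, code_inj⟩ := Countable.exists_injective_nat ι
  let offset (x : Σ i, ZMod (l i)) : ℤ := centeredOffset (l x.1) x.2.val
  refine ⟨fun v => code (e.symm v).1, fun v => offset (e.symm v), ?_, fun v => ?_, fun v => ?_⟩
  · suffices Injective fun x : Σ i, ZMod (l i) => ((code x.1 : ℤ), offset x) from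
      this.comp e.symm.injective
    rintro ⟨i, z⟩ ⟨j, z'⟩ h
    simp only [Prod.mk.injEq, Nat.cast_inj] at h
    obtain rfl := code_inj h.1
    obtain rfl := ZMod.val_injective _ (centeredOffset_injective _ h.2)
    rfl
  · obtain ⟨⟨i, z⟩, rfl⟩ := e.surjective v
    have val_succ : (z + 1).val = (z.val + 1) % l i := by
      simp [ZMod.val_add, ZMod.val_one_eq_one_mod]
    simp only [← he, Equiv.symm_apply_apply, offset, val_succ]
    exact ⟨trivial, centeredOffset_succ_mod z.val_lt⟩
  · obtain ⟨⟨i, z⟩, rfl⟩ := e.surjective v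
    refine ⟨e ⟨i, (l i - 1 - z.val : ℕ)⟩, ?_⟩
    have := z.val_lt
    simp only [Equiv.symm_apply_apply, offset, true_and]
    rw [ZMod.val_cast_of_lt (by omega), centeredOffset_reflect this]

theorem exists_equiv_fin_rank {V α : Type*} [Fintype V] [LinearOrder α] {K : V → α}
    (hK : Injective K) :
    ∃ y : V ≃ Fin (Fintype.card V), ∀ v, (y v : ℕ) = #{w | K w < K v} ∧
      Fintype.card V - 1 - y v = #{w | K v < K w} := by
  let _ : LinearOrder V := LinearOrder.lift' K hK
  let y := (Fintype.orderIsoFinOfCardEq V rfl).symm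
  have lt_iff (v w : V) : y v < y w ↔ K v < K w := y.lt_iff_lt
  refine ⟨y.toEquiv, fun v => ⟨?_, ?_⟩⟩
  · rw [← Fin.card_Iio]
    exact (card_bijective y y.bijective fun w => by simp [lt_iff]).symm
  · rw [← Fin.card_Ioi]
    exact (card_bijective y y.bijective fun w => by simp [lt_iff]).symm

theorem card_le_card_add_of_injOn_sdiff {α β : Type*} [DecidableEq α] {P Q : Finset α}
    {T : Finset β} (g : α → β) (hg : ∀ u ∈ P \ Q, g u ∈ T)
    (g_inj : Set.InjOn g (P \ Q : Finset α)) : #P ≤ #Q + #T :=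
  calc #P ≤ #(P \ Q) + #Q := card_le_card_sdiff_add_card
    _ ≤ #Q + #T := by grind [card_le_card_of_injOn g hg g_inj]

theorem exists_equiv_fin_lipschitz {V α : Type*} [Fintype V] [LinearOrder α] {c : V → α}
    {F : V → ℤ} (h : Injective fun v => (c v, F v)) :
    ∃ y : V ≃ Fin (Fintype.card V), ∀ v w, c v = c w → |(y v : ℤ) - y w| ≤ |F v - F w| := by
  classical
  obtain ⟨y, hy⟩ := exists_equiv_fin_rank (toLex.injective.comp h)
  simp only [comp_apply, Prod.Lex.toLex_lt_toLex] at hy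
  have rank_le (v w : V) (hc : c v = c w) : (y v : ℤ) ≤ y w + |F v - F w| := by
    let below (v : V) : Finset V := {u | c u < c v ∨ c u = c v ∧ F u < F v}
    have mem_between (u : V) (hu : u ∈ below v \ below w) :
        c u = c v ∧ F u ∈ Ico (F w) (F v) := by
      grind
    have := card_le_card_add_of_injOn_sdiff F (fun u hu => (mem_between u hu).2)
      fun u hu u' hu' hF => h <| Prod.ext
        ((mem_between u hu).1.trans (mem_between u' hu').1.symm) hF
    rw [Int.card_Ico, ← (hy v).1, ← (hy w).1] at this
    grind
  refine ⟨y, fun v w hc => abs_sub_le_iff.2 ⟨?_, ?_⟩⟩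
  · linarith [rank_le v w hc]
  · linarith [rank_le w v hc.symm, abs_sub_comm (F v) (F w)]

/-- The sorting key of the vertex on level `L` of cycle number `c` in the boustrophedon order:
levels are listed in increasing order, and the direction in which the cycles are run through
alternates from each level to the next. -/
def zigzagKey (c L : ℤ) : ℤ ×ₗ ℤ :=
  toLex (L, if Even L then c else -c)

theorem zigzagKey_lt_iff {c L c' L' : ℤ} : zigzagKey c L < zigzagKey c' L' ↔
    L < L' ∨ L = L' ∧ if Even L then c < c' else c' < c := by
  grind [zigzagKey, Prod.Lex.toLex_lt_toLex]

theorem zigzagKey_inj {c L c' L' : ℤ} : zigzagKey c L = zigzagKey c' L' ↔ c = c' ∧ L = L' := by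
  grind [zigzagKey, EmbeddingLike.apply_eq_iff_eq]

theorem exists_equiv_fin_zigzag {V : Type*} [Fintype V] {c L : V → ℤ}
    (h : Injective fun v => (c v, L v)) (hrefl : ∀ v, ∃ w, c w = c v ∧ L w = -L v) :
    ∃ y : V ≃ Fin (Fintype.card V), ∀ v w, c v = c w → |L v + L w| ≤ 1 →
      |(y v : ℤ) + y w - (Fintype.card V - 1)| ≤ #(univ.image c) := by
  classical
  have key_inj : Injective fun v => zigzagKey (c v) (L v) := fun v w hvw =>
    h (Prod.ext_iff.2 (zigzagKey_inj.1 hvw))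
  obtain ⟨y, hy⟩ := exists_equiv_fin_rank key_inj
  choose R cR LR using hrefl
  have R_inv : Involutive R := fun v => h (by simp [cR, LR])
  have card_above (w : V) :
      Fintype.card V - 1 - y w = #{u | zigzagKey (c w) (L w) < zigzagKey (c u) (-L u)} := by
    rw [(hy w).2]
    exact card_bijective R R_inv.bijective fun u => by simp [cR, LR]
  refine ⟨y, fun v w hc hL => ?_⟩
  let P : Finset V := {u | zigzagKey (c u) (L u) < zigzagKey (c v) (L v)}
  let Q : Finset V := {u | zigzagKey (c w) (L w) < zigzagKey (c u) (-L u)}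
  -- Adjacent levels run through the cycles in opposite directions, so `P` and `Q` differ in at most
  -- one vertex of each cycle.
  have PQ_inj : Set.InjOn c (P \ Q : Finset V) := by
    intro u hu u' hu' huu'
    refine h (Prod.ext huu' ?_)
    grind [zigzagKey_lt_iff]
  have QP_inj : Set.InjOn c (Q \ P : Finset V) := by
    intro u hu u' hu' huu'
    refine h (Prod.ext huu' ?_)
    grind [zigzagKey_lt_iff]
  have hPQ := card_le_card_add_of_injOn_sdiff c (fun u _ => mem_image_of_mem c (mem_univ u)) PQ_inj
  have hQP := card_le_card_add_of_injOn_sdiff c (fun u _ => mem_image_of_mem c (mem_univ u)) QP_inj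
  have := (y w).isLt
  grind

section Labels

variable {V : Type*} [Fintype V]

theorem exists_equiv_fin_bandwidth_le_two (σ : Equiv.Perm V) :
    ∃ y : V ≃ Fin (Fintype.card V), ∀ v, |(y (σ v) : ℤ) - y v| ≤ 2 := by
  obtain ⟨c, A, h, hσ, -⟩ := exists_centered_coordinates σ
  -- Each cycle is folded in half: the offsets `0, 1, -1, 2, -2, …` go to `1, 2, 3, 4, 5, …`.
  let F (v : V) : ℤ := if 0 < A v then 2 * A v else 1 - 2 * A v
  have F_inj : Injective fun v => (c v, F v) := fun v w hvw => h (by grind)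
  obtain ⟨y, hy⟩ := exists_equiv_fin_lipschitz F_inj
  refine ⟨y, fun v => (hy _ _ (hσ v).1).trans ?_⟩
  grind

theorem exists_abs_imbalance_add_imbalance_le_two (π ρ : Equiv.Perm V) :
    ∃ y z : V ≃ Fin (Fintype.card V), ∀ v, |imbalance π y v + imbalance ρ z v| ≤ 2 := by
  obtain ⟨y, hy⟩ := exists_equiv_fin_bandwidth_le_two (ρ.symm * π)
  refine ⟨y, y.trans Fin.revPerm, fun v => ?_⟩
  have := hy (π.symm v)
  have := (y v).isLt
  have := (y (ρ.symm v)).isLt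
  simp only [imbalance, Equiv.trans_apply, Fin.revPerm_apply, Fin.val_rev] at *
  grind [Equiv.Perm.mul_apply, Equiv.apply_symm_apply]

theorem three_mul_card_image_le_card {β : Type*} [DecidableEq β] {π : V → V} {c : V → β}
    (ne : ∀ v, π v ≠ v) (ne_two : ∀ v, π (π v) ≠ v) (hc : ∀ v, c (π v) = c v) :
    3 * #(univ.image c) ≤ Fintype.card V := by
  classical
  refine mul_card_image_le_card univ 3 fun b hb => ?_
  obtain ⟨v, -, rfl⟩ := mem_image.1 hb
  rw [← card_eq_three.2 ⟨v, π v, π (π v), (ne v).symm, (ne_two v).symm, (ne _).symm, rfl⟩]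
  refine card_le_card ?_
  simp [insert_subset_iff, hc]

theorem exists_abs_imbalance_le (π : Equiv.Perm V) (ne : ∀ v, π v ≠ v)
    (ne_two : ∀ v, π (π v) ≠ v) :
    ∃ y : V ≃ Fin (Fintype.card V), ∀ v, |imbalance π y v| ≤ (Fintype.card V / 3 : ℕ) := by
  obtain ⟨c, A, h, hπ, hrefl⟩ := exists_centered_coordinates π
  let L (v : V) : ℤ := if Even (A v) then A v else -A v
  have L_inj : Injective fun v => (c v, L v) := fun v w hvw => h (by grind)
  have L_refl (v : V) : ∃ w, c w = c v ∧ L w = -L v := by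
    obtain ⟨w, hcw, hAw⟩ := hrefl v
    exact ⟨w, hcw, by grind⟩
  have L_step (v : V) : |L (π v) + L v| ≤ 1 := by grind
  obtain ⟨y, hy⟩ := exists_equiv_fin_zigzag L_inj L_refl
  have few_cycles := three_mul_card_image_le_card ne ne_two fun v => (hπ v).1
  refine ⟨y, fun v => ?_⟩
  have := hy (π (π.symm v)) (π.symm v) (hπ _).1 (L_step _)
  rw [Equiv.apply_symm_apply] at this
  exact this.trans (by omega)

theorem exists_abs_sum_imbalance_le : ∀ {r : ℕ} (π : Fin r → Equiv.Perm V),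
    (∀ i v, π i v ≠ v) → (∀ i v, π i (π i v) ≠ v) →
    ∃ y : Fin r → V ≃ Fin (Fintype.card V), ∀ v,
      |∑ i, imbalance (π i) (y i) v| ≤ (2 * (r / 2) + Fintype.card V / 3 * (r % 2) : ℕ)
  | 0, _, _, _ => ⟨Fin.elim0, by simp⟩
  | 1, π, ne, ne_two => by
    obtain ⟨y, hy⟩ := exists_abs_imbalance_le (π 0) (ne 0) (ne_two 0)
    exact ⟨fun _ => y, by simpa using hy⟩
  | r + 2, π, ne, ne_two => by
    obtain ⟨y, hy⟩ := exists_abs_sum_imbalance_le (fun i => π i.succ.succ) (fun i => ne _)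
      (fun i => ne_two _)
    obtain ⟨y₀, y₁, hy₀₁⟩ := exists_abs_imbalance_add_imbalance_le_two (π 0) (π 1)
    refine ⟨Fin.cons y₀ (Fin.cons y₁ y), fun v => ?_⟩
    simp only [Fin.sum_univ_succ, Fin.cons_zero, Fin.cons_succ, Fin.succ_zero_eq_one]
    rw [← add_assoc]
    refine (abs_add_le _ _).trans ((add_le_add (hy₀₁ v) (hy v)).trans ?_)
    rw [Nat.add_mod_right, Nat.add_div_right _ two_pos]
    push_cast
    linarith

end Labels

theorem even_regular_approx_magic_general {V : Type*} [Finite V] {k : ℕ} (G : SimpleGraph V)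
    (hreg : ∀ v, Nat.card (G.neighborSet v) = k) (heven : Even k) :
    ∃ f : Sym2 V → ℕ, Set.BijOn f G.edgeSet (Set.Icc 1 (Nat.card V * k / 2)) ∧
      ∀ u v, vertexSum G f u ≤
        vertexSum G f v + if 4 ∣ k then k else 2 * (Nat.card V / 3) + (k - 2) := by
  have := Fintype.ofFinite V
  obtain ⟨r, rfl⟩ := heven.two_dvd
  obtain ⟨π, hπ⟩ := exists_isTwoFactorization G hreg
  obtain ⟨y, hy⟩ := exists_abs_sum_imbalance_le π hπ.apply_ne hπ.apply_apply_ne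
  obtain ⟨f, f_bij, c, vertexSum_eq⟩ := hπ.exists_edgeLabeling_vertexSum y
  have edge_count : Nat.card V * (2 * r) / 2 = r * Fintype.card V := by
    rw [Nat.mul_left_comm, Nat.mul_div_cancel_left _ two_pos, Nat.card_eq_fintype_card, mul_comm]
  refine ⟨f, edge_count ▸ f_bij, fun u v => ?_⟩
  have hu := abs_le.1 (hy u)
  have hv := abs_le.1 (hy v)
  have sum_u := vertexSum_eq u
  have sum_v := vertexSum_eq v
  rw [Nat.card_eq_fintype_card]
  rcases Nat.mod_two_eq_zero_or_one r with hr | hr <;> rw [hr] at hu hv <;> grind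

/-- A `k`-regular graph on `n` vertices with `k ≥ 2` even (not necessarily connected)
is `(2n/3 + k − 1)`-approximately magic: the difference `D` between any two vertex sums
satisfies `3·D ≤ 2n + 3(k − 1)`. -/
theorem even_regular_approx_magic {V : Type} [Finite V] {n k : ℕ}
    (G : SimpleGraph V) (hn : Nat.card V = n)
    (hreg : ∀ v : V, Nat.card (G.neighborSet v) = k)
    (hk2 : 2 ≤ k) (heven : Even k) :
    ∃ f : Sym2 V → ℕ,
      Set.BijOn f G.edgeSet (Set.Icc 1 (n * k / 2)) ∧
      ∀ u v : V, 3 * vertexSum G f u ≤ 3 * vertexSum G f v + (2 * n + 3 * (k - 1)) := by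
  subst hn
  obtain ⟨f, f_bij, hf⟩ := even_regular_approx_magic_general G hreg heven
  refine ⟨f, f_bij, fun u v => ?_⟩
  have k_lt_card : k < Nat.card V := hreg v ▸ Finite.card_subtype_lt (G.irrefl (v := v))
  have := hf u v
  grind
end
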